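/- Let A, B be real N×N matrices, Ĉ ∈ ℝ with μ₂[A+B] ≤ Ĉ, T > 0, N_t ≥ 1, Δt = T/N_t with Ĉ·Δt ≤ 1, and t_n = nΔt. Let g : [0,T] → ℝ^N be continuous and let v : [0,T] → ℝ^N be three times continuously differentiable with ‖v'''(t)‖₂ ≤ M₃ for all t ∈ [0,T], and suppose the spatial truncation error δ(t) := v'(t) − (A+B)v(t) − g(t) satisfies ‖δ(t)‖₂ ≤ η for all t ∈ [0,T]. Define Vⁿ by V⁰ = v(0) and (I − (Δt/2)(A+B))V^{n+1} = (I + (Δt/2)(A+B))Vⁿ + (Δt/2)(g(t_n) + g(t_{n+1})). Then for every n with nΔt ≤ T, the global error satisfies ‖v(t_n) − Vⁿ‖₂ ≤ 2T·e^{2T·Ĉ⁺}·(η + (Δt²/12)·M₃), where Ĉ⁺ = max(Ĉ, 0). In particular, if η ≤ C₂(Δx² + Δy²), the global error is bounded by a constant times Δt² + Δx² + Δy². -/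

import Mathlib

open Matrix

/-- The Euclidean (ℓ2) norm of a vector. -/
noncomputable def l2norm {n : Type*} [Fintype n] (v : n → ℝ) : ℝ :=
  Real.sqrt (∑ i, (v i)^2)

/-!
The error `v (t_n) - V n` satisfies the Crank–Nicolson recursion itself, forced by the residual of
the exact solution. This residual consists of the trapezoidal quadrature error of `v'`, of norm at
most `M₃ * Δt ^ 3 / 12`, and of the spatial error `δ`, which contributes at most `Δt * η`.
Pairing one step of the recursion with the sum of its two successive errors and using
`⟪L z, z⟫ ≤ C * ‖z‖ ^ 2`, where `L` is the semidiscrete operator and `C = max Chat 0`, bounds the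
new error by `(1 + 2 * C * Δt)` times the old one plus twice the residual. The restriction
`Chat * Δt ≤ 1` is what allows the implicit half of the step to be absorbed. The discrete Grönwall
inequality then accumulates these bounds over `[0, T]`.
-/

section Trapezoid

open Set

variable {E : Type*} [NormedAddCommGroup E] [NormedSpace ℝ E] {a b M : ℝ}

lemma norm_le_mul_sub_pow_of_norm_deriv_le {f f' : ℝ → E} {c : ℝ} {n : ℕ}
    (hf : ∀ t ∈ Icc a b, HasDerivWithinAt f (f' t) (Icc a b) t) (hfa : f a = 0)
    (hf' : ∀ t ∈ Icc a b, ‖f' t‖ ≤ c * (t - a) ^ n) :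
    ∀ t ∈ Icc a b, ‖f t‖ ≤ c / (n + 1) * (t - a) ^ (n + 1) := by
  have hpow (t : ℝ) :
      HasDerivAt (fun s ↦ c / (n + 1) * (s - a) ^ (n + 1)) (c * (t - a) ^ n) t := by
    refine ((((hasDerivAt_id t).sub_const a).pow (n + 1)).const_mul (c / (n + 1))).congr_deriv ?_
    simp [field]
  have hf_right : ∀ t ∈ Ico a b, HasDerivWithinAt f (f' t) (Ici t) t := fun t ht ↦
    (hf t (Ico_subset_Icc_self ht)).mono_of_mem_nhdsWithin (Icc_mem_nhdsGE_of_mem ht)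
  exact image_norm_le_of_norm_deriv_right_le_deriv_boundary
    (fun t ht ↦ (hf t ht).continuousWithinAt) hf_right (by simp [hfa]) hpow
    fun t ht ↦ hf' t (Ico_subset_Icc_self ht)

variable {u u₁ u₂ u₃ : ℝ → E}

lemma norm_trapezoid_error_le (hab : a ≤ b)
    (hu : ∀ t ∈ Icc a b, HasDerivWithinAt u (u₁ t) (Icc a b) t)
    (hu₁ : ∀ t ∈ Icc a b, HasDerivWithinAt u₁ (u₂ t) (Icc a b) t)
    (hu₂ : ∀ t ∈ Icc a b, HasDerivWithinAt u₂ (u₃ t) (Icc a b) t)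
    (hM : ∀ t ∈ Icc a b, ‖u₃ t‖ ≤ M) :
    ‖u b - u a - ((b - a) / 2) • (u₁ a + u₁ b)‖ ≤ M / 12 * (b - a) ^ 3 := by
  let err (t : ℝ) : E := u t - u a - ((t - a) / 2) • (u₁ a + u₁ t)
  let err₁ (t : ℝ) : E := (1 / 2 : ℝ) • (u₁ t - u₁ a) - ((t - a) / 2) • u₂ t
  let err₂ (t : ℝ) : E := -((t - a) / 2) • u₃ t
  have hhalf (t : ℝ) : HasDerivWithinAt (fun s ↦ (s - a) / 2) (1 / 2) (Icc a b) t :=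
    ((hasDerivWithinAt_id t _).sub_const a).div_const 2
  have herr : ∀ t ∈ Icc a b, HasDerivWithinAt err (err₁ t) (Icc a b) t := fun t ht ↦
    (((hu t ht).sub_const (u a)).sub ((hhalf t).smul ((hu₁ t ht).const_add (u₁ a)))).congr_deriv
      (by module)
  have herr₁ : ∀ t ∈ Icc a b, HasDerivWithinAt err₁ (err₂ t) (Icc a b) t := fun t ht ↦
    ((((hu₁ t ht).sub_const (u₁ a)).const_smul (1 / 2 : ℝ)).sub
      ((hhalf t).smul (hu₂ t ht))).congr_deriv (by module)
  have herr₂_le : ∀ t ∈ Icc a b, ‖err₂ t‖ ≤ M / 2 * (t - a) ^ 1 := by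
    intro t ht
    have hta : 0 ≤ (t - a) / 2 := by linarith [ht.1]
    calc ‖err₂ t‖ = (t - a) / 2 * ‖u₃ t‖ := by
          rw [norm_smul, norm_neg, Real.norm_of_nonneg hta]
      _ ≤ (t - a) / 2 * M := by grw [hM t ht]
      _ = M / 2 * (t - a) ^ 1 := by ring
  have herr₁_le := norm_le_mul_sub_pow_of_norm_deriv_le herr₁ (by simp [err₁]) herr₂_le
  have herr_le := norm_le_mul_sub_pow_of_norm_deriv_le herr (by simp [err]) herr₁_le
  exact (herr_le b (right_mem_Icc.2 hab)).trans_eq (by push_cast; ring)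

lemma norm_trapezoid_error_le_of_norm_deriv_sub_le {p q : E} {η : ℝ} (hab : a ≤ b)
    (hu : ∀ t ∈ Icc a b, HasDerivWithinAt u (u₁ t) (Icc a b) t)
    (hu₁ : ∀ t ∈ Icc a b, HasDerivWithinAt u₁ (u₂ t) (Icc a b) t)
    (hu₂ : ∀ t ∈ Icc a b, HasDerivWithinAt u₂ (u₃ t) (Icc a b) t)
    (hM : ∀ t ∈ Icc a b, ‖u₃ t‖ ≤ M) (hp : ‖u₁ a - p‖ ≤ η) (hq : ‖u₁ b - q‖ ≤ η) :
    ‖u b - u a - ((b - a) / 2) • (p + q)‖ ≤ (b - a) * (η + (b - a) ^ 2 / 12 * M) := by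
  have hhalf : 0 ≤ (b - a) / 2 := by linarith
  calc ‖u b - u a - ((b - a) / 2) • (p + q)‖
      = ‖(u b - u a - ((b - a) / 2) • (u₁ a + u₁ b)) +
          ((b - a) / 2) • ((u₁ a - p) + (u₁ b - q))‖ := by congr 1; module
    _ ≤ ‖u b - u a - ((b - a) / 2) • (u₁ a + u₁ b)‖ +
          (b - a) / 2 * (‖u₁ a - p‖ + ‖u₁ b - q‖) := by
        grw [norm_add_le, norm_smul, Real.norm_of_nonneg hhalf, norm_add_le]
    _ ≤ M / 12 * (b - a) ^ 3 + (b - a) / 2 * (η + η) := by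
        grw [norm_trapezoid_error_le hab hu hu₁ hu₂ hM, hp, hq]
    _ = (b - a) * (η + (b - a) ^ 2 / 12 * M) := by ring

end Trapezoid

lemma le_mul_exp_mul_of_le_one_add_mul_add {e : ℕ → ℝ} {c h r T : ℝ} {n : ℕ}
    (he : ∀ k, 0 ≤ e k) (he0 : e 0 = 0) (hc : 0 ≤ c) (hh : 0 ≤ h) (hr : 0 ≤ r)
    (hstep : ∀ k < n, e (k + 1) ≤ (1 + c * h) * e k + h * r) (hn : n * h ≤ T) :
    e n ≤ T * Real.exp (T * c) * r := by
  -- Freezing the sequence at `n` extends the recursion to all `k`, as `discrete_gronwall` requires.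
  have hfrozen : ∀ k ≥ 0, e (min (k + 1) n) ≤ (1 + c * h) * e (min k n) + h * r := by
    intro k _
    rcases lt_or_ge k n with hk | hk
    · simpa only [min_eq_left hk.le, min_eq_left (Nat.succ_le_of_lt hk)] using hstep k hk
    · rw [min_eq_right hk, min_eq_right (hk.trans k.le_succ)]
      linarith [mul_nonneg (mul_nonneg hc hh) (he n), mul_nonneg hh hr]
  have hT : 0 ≤ T := (mul_nonneg n.cast_nonneg hh).trans hn
  calc e n ≤ n * (h * r) * Real.exp (n * (c * h)) := by
        simpa [he0] using discrete_gronwall (u := fun k ↦ e (min k n)) (he _) hfrozen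
          (fun _ _ ↦ mul_nonneg hc hh) (fun _ _ ↦ mul_nonneg hh hr) n.zero_le
    _ = (n * h) * Real.exp ((n * h) * c) * r := by ring_nf
    _ ≤ T * Real.exp (T * c) * r := by gcongr

section CrankNicolson

variable {F : Type*} [AddCommGroup F] [Module ℝ F]

/-- `y` is obtained from `x` by one Crank–Nicolson step of length `h` for the equation
`u' = L u + g`. The vector `f` is the total forcing of the step, `(h / 2) • (g t + g (t + h))` for
the scheme itself; leaving it free lets the exact solution and the error be viewed as steps too. -/
def IsCrankNicolsonStep (L : F →ₗ[ℝ] F) (h : ℝ) (f x y : F) : Prop :=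
  y - (h / 2) • L y = x + (h / 2) • L x + f

lemma IsCrankNicolsonStep.sub {L : F →ₗ[ℝ] F} {h : ℝ} {f₁ f₂ x₁ x₂ y₁ y₂ : F}
    (h₁ : IsCrankNicolsonStep L h f₁ x₁ y₁)
    (h₂ : IsCrankNicolsonStep L h f₂ x₂ y₂) :
    IsCrankNicolsonStep L h (f₁ - f₂) (x₁ - x₂) (y₁ - y₂) := by
  unfold IsCrankNicolsonStep at *
  rw [map_sub, map_sub]
  linear_combination (norm := module) h₁ - h₂

variable {E : Type*} [NormedAddCommGroup E] [InnerProductSpace ℝ E] {L : E →ₗ[ℝ] E} {C h : ℝ}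

lemma IsCrankNicolsonStep.norm_sub_norm_le {f x y : E} (hstep : IsCrankNicolsonStep L h f x y)
    (hL : ∀ z, inner ℝ (L z) z ≤ C * ‖z‖ ^ 2) (hC : 0 ≤ C) (hh : 0 ≤ h) :
    ‖y‖ - ‖x‖ ≤ C * h / 2 * (‖y‖ + ‖x‖) + ‖f‖ := by
  have hdiff : y - x = (h / 2) • L (y + x) + f := by
    unfold IsCrankNicolsonStep at hstep
    rw [map_add]
    linear_combination (norm := module) hstep
  have henergy : (‖y‖ - ‖x‖) * (‖y‖ + ‖x‖) ≤
      (C * h / 2 * (‖y‖ + ‖x‖) + ‖f‖) * (‖y‖ + ‖x‖) :=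
    calc (‖y‖ - ‖x‖) * (‖y‖ + ‖x‖)
        = inner ℝ (y - x) (y + x) := by
          rw [inner_sub_left, inner_add_right, inner_add_right, real_inner_self_eq_norm_sq,
            real_inner_self_eq_norm_sq, real_inner_comm]
          ring
      _ = h / 2 * inner ℝ (L (y + x)) (y + x) + inner ℝ f (y + x) := by
          rw [hdiff, inner_add_left, real_inner_smul_left]
      _ ≤ h / 2 * (C * ‖y + x‖ ^ 2) + ‖f‖ * ‖y + x‖ := by
          grw [hL, real_inner_le_norm]
      _ ≤ h / 2 * (C * (‖y‖ + ‖x‖) ^ 2) + ‖f‖ * (‖y‖ + ‖x‖) := by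
          grw [norm_add_le]
      _ = (C * h / 2 * (‖y‖ + ‖x‖) + ‖f‖) * (‖y‖ + ‖x‖) := by ring
  rcases (add_nonneg (norm_nonneg y) (norm_nonneg x)).eq_or_lt with hzero | hpos
  · rw [← hzero]
    linarith [norm_nonneg x, norm_nonneg f]
  · exact le_of_mul_le_mul_right henergy hpos

lemma IsCrankNicolsonStep.norm_le {f x y : E} (hstep : IsCrankNicolsonStep L h f x y)
    (hL : ∀ z, inner ℝ (L z) z ≤ C * ‖z‖ ^ 2) (hC : 0 ≤ C) (hh : 0 ≤ h) (hCh : C * h ≤ 1) :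
    ‖y‖ ≤ (1 + 2 * C * h) * ‖x‖ + 2 * ‖f‖ := by
  refine le_of_mul_le_mul_left (a := 1 - C * h / 2) ?_ (by linarith)
  calc (1 - C * h / 2) * ‖y‖ ≤ (1 + C * h / 2) * ‖x‖ + ‖f‖ := by
        linarith [hstep.norm_sub_norm_le hL hC hh]
    _ ≤ (1 + C * h / 2) * ‖x‖ + ‖f‖ + (1 - C * h) * (C * h * ‖x‖ + ‖f‖) :=
        le_add_of_nonneg_right (mul_nonneg (sub_nonneg.2 hCh) (by positivity))
    _ = (1 - C * h / 2) * ((1 + 2 * C * h) * ‖x‖ + 2 * ‖f‖) := by ring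

open Set

lemma IsCrankNicolsonStep.norm_sub_le {u u₁ u₂ u₃ : ℝ → E} {a b η M : ℝ} {p q x y : E}
    (hstep : IsCrankNicolsonStep L h ((h / 2) • (p + q)) x y)
    (hL : ∀ z, inner ℝ (L z) z ≤ C * ‖z‖ ^ 2) (hC : 0 ≤ C) (hh : 0 ≤ h) (hCh : C * h ≤ 1)
    (hab : b - a = h)
    (hu : ∀ t ∈ Icc a b, HasDerivWithinAt u (u₁ t) (Icc a b) t)
    (hu₁ : ∀ t ∈ Icc a b, HasDerivWithinAt u₁ (u₂ t) (Icc a b) t)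
    (hu₂ : ∀ t ∈ Icc a b, HasDerivWithinAt u₂ (u₃ t) (Icc a b) t)
    (hM : ∀ t ∈ Icc a b, ‖u₃ t‖ ≤ M)
    (hp : ‖u₁ a - L (u a) - p‖ ≤ η) (hq : ‖u₁ b - L (u b) - q‖ ≤ η) :
    ‖u b - y‖ ≤ (1 + 2 * C * h) * ‖u a - x‖ + h * (2 * (η + h ^ 2 / 12 * M)) := by
  subst hab
  let residual : E := u b - u a - ((b - a) / 2) • ((L (u a) + p) + (L (u b) + q))
  have hresidual : ‖residual‖ ≤ (b - a) * (η + (b - a) ^ 2 / 12 * M) :=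
    norm_trapezoid_error_le_of_norm_deriv_sub_le (sub_nonneg.1 hh) hu hu₁ hu₂ hM
      (by rwa [← sub_sub]) (by rwa [← sub_sub])
  have hexact : IsCrankNicolsonStep L (b - a) (((b - a) / 2) • (p + q) + residual) (u a) (u b) := by
    unfold IsCrankNicolsonStep residual
    module
  have herror : IsCrankNicolsonStep L (b - a) residual (u a - x) (u b - y) := by
    simpa only [add_sub_cancel_left] using hexact.sub hstep
  grw [herror.norm_le hL hC hh hCh, hresidual, mul_left_comm]

theorem crank_nicolson_global_convergence_general {E : Type*} [NormedAddCommGroup E]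
    [InnerProductSpace ℝ E] (L : E →ₗ[ℝ] E) (C : ℝ)
    (hL : ∀ z, inner ℝ (L z) z ≤ C * ‖z‖ ^ 2) (T h : ℝ) (hh : 0 ≤ h) (hCh : C * h ≤ 1)
    (g v v₁ v₂ v₃ : ℝ → E)
    (hv : ∀ t ∈ Icc 0 T, HasDerivWithinAt v (v₁ t) (Icc 0 T) t)
    (hv₁ : ∀ t ∈ Icc 0 T, HasDerivWithinAt v₁ (v₂ t) (Icc 0 T) t)
    (hv₂ : ∀ t ∈ Icc 0 T, HasDerivWithinAt v₂ (v₃ t) (Icc 0 T) t)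
    (M : ℝ) (hM : ∀ t ∈ Icc 0 T, ‖v₃ t‖ ≤ M)
    (η : ℝ) (hη : ∀ t ∈ Icc 0 T, ‖v₁ t - L (v t) - g t‖ ≤ η)
    (V : ℕ → E) (hV0 : V 0 = v 0)
    (hV : ∀ n : ℕ, (n + 1) * h ≤ T →
      IsCrankNicolsonStep L h ((h / 2) • (g (n * h) + g ((n + 1) * h))) (V n) (V (n + 1))) :
    (∀ n : ℕ, n * h ≤ T → ‖v (n * h) - V n‖ ≤
      2 * T * Real.exp (2 * T * max C 0) * (η + h ^ 2 / 12 * M)) ∧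
    (∀ C₂ Δx Δy : ℝ, η ≤ C₂ * (Δx ^ 2 + Δy ^ 2) →
      ∃ K : ℝ, ∀ n : ℕ, n * h ≤ T → ‖v (n * h) - V n‖ ≤ K * (h ^ 2 + Δx ^ 2 + Δy ^ 2)) := by
  have hL' (z : E) : inner ℝ (L z) z ≤ max C 0 * ‖z‖ ^ 2 := by grw [hL, ← le_max_left C 0]
  have hCh' : max C 0 * h ≤ 1 := by
    rw [max_mul_of_nonneg _ _ hh, zero_mul]
    exact max_le hCh zero_le_one
  have hone_step (k : ℕ) (hk : (k + 1) * h ≤ T) : ‖v ((k + 1) * h) - V (k + 1)‖ ≤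
      (1 + 2 * max C 0 * h) * ‖v (k * h) - V k‖ + h * (2 * (η + h ^ 2 / 12 * M)) := by
    have hle : k * h ≤ (k + 1) * h := by linarith
    have hsub : Icc (k * h) ((k + 1) * h) ⊆ Icc 0 T := Icc_subset_Icc (by positivity) hk
    exact (hV k hk).norm_sub_le hL' (le_max_right C 0) hh hCh' (by ring)
      (fun t ht ↦ (hv t (hsub ht)).mono hsub) (fun t ht ↦ (hv₁ t (hsub ht)).mono hsub)
      (fun t ht ↦ (hv₂ t (hsub ht)).mono hsub) (fun t ht ↦ hM t (hsub ht))
      (hη _ (hsub (left_mem_Icc.2 hle))) (hη _ (hsub (right_mem_Icc.2 hle)))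
  have hbound (n : ℕ) (hn : n * h ≤ T) : ‖v (n * h) - V n‖ ≤
      2 * T * Real.exp (2 * T * max C 0) * (η + h ^ 2 / 12 * M) := by
    have hT : 0 ∈ Icc 0 T := ⟨le_rfl, le_trans (by positivity) hn⟩
    have hη0 : 0 ≤ η := (norm_nonneg _).trans (hη 0 hT)
    have hM0 : 0 ≤ M := (norm_nonneg _).trans (hM 0 hT)
    calc ‖v (n * h) - V n‖
        ≤ T * Real.exp (T * (2 * max C 0)) * (2 * (η + h ^ 2 / 12 * M)) := by
          refine le_mul_exp_mul_of_le_one_add_mul_add (e := fun k ↦ ‖v (k * h) - V k‖)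
            (fun _ ↦ norm_nonneg _) (by simp [hV0]) (by positivity) hh (by positivity)
            (fun k hk ↦ ?_) hn
          push_cast
          refine hone_step k (le_trans ?_ hn)
          gcongr
          exact_mod_cast hk
      _ = 2 * T * Real.exp (2 * T * max C 0) * (η + h ^ 2 / 12 * M) := by ring_nf
  refine ⟨hbound, fun C₂ Δx Δy hC₂ ↦
    ⟨2 * T * Real.exp (2 * T * max C 0) * max C₂ (M / 12), fun n hn ↦ ?_⟩⟩
  have hT : 0 ≤ T := le_trans (by positivity) hn
  have hΔ : 0 ≤ Δx ^ 2 + Δy ^ 2 := by positivity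
  have hρ : η + h ^ 2 / 12 * M ≤ max C₂ (M / 12) * (h ^ 2 + Δx ^ 2 + Δy ^ 2) := by
    linarith [mul_le_mul_of_nonneg_right (le_max_left C₂ (M / 12)) hΔ,
      mul_le_mul_of_nonneg_right (le_max_right C₂ (M / 12)) (sq_nonneg h)]
  grw [hbound n hn, hρ, ← mul_assoc]

end CrankNicolson

section EuclideanSpace

open WithLp

variable {ι : Type*} [Fintype ι]

lemma l2norm_eq_norm_toLp (x : ι → ℝ) : l2norm x = ‖toLp 2 x‖ := by
  simp [l2norm, EuclideanSpace.norm_eq]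

lemma hasDerivAt_toLp_iteratedDeriv {v : ℝ → ι → ℝ} {n : WithTop ℕ∞} (hv : ContDiff ℝ n v) {k : ℕ}
    (hk : k < n) (t : ℝ) :
    HasDerivAt (fun s ↦ toLp 2 (iteratedDeriv k v s)) (toLp 2 (iteratedDeriv (k + 1) v t)) t := by
  rw [iteratedDeriv_succ]
  exact (EuclideanSpace.equiv ι ℝ).symm.hasFDerivAt.comp_hasDerivAt t
    (hv.differentiable_iteratedDeriv k hk t).hasDerivAt

variable [DecidableEq ι] {A : Matrix ι ι ℝ}

lemma inner_toEuclideanLin_self_le {C : ℝ} (hA : ∀ x : ι → ℝ, A *ᵥ x ⬝ᵥ x ≤ C * (x ⬝ᵥ x))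
    (z : EuclideanSpace ℝ ι) : inner ℝ (toEuclideanLin A z) z ≤ C * ‖z‖ ^ 2 := by
  rw [← real_inner_self_eq_norm_sq, EuclideanSpace.inner_eq_star_dotProduct,
    EuclideanSpace.inner_eq_star_dotProduct]
  simpa [dotProduct_comm] using hA (ofLp z)

lemma isCrankNicolsonStep_toLp_iff {h : ℝ} {f x y : ι → ℝ} :
    IsCrankNicolsonStep (toEuclideanLin A) h (toLp 2 f) (toLp 2 x) (toLp 2 y) ↔
      (1 - (h / 2) • A) *ᵥ y = (1 + (h / 2) • A) *ᵥ x + f := by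
  rw [sub_mulVec, add_mulVec, one_mulVec, one_mulVec, smul_mulVec, smul_mulVec,
    ← (toLp_injective 2).eq_iff]
  simp only [IsCrankNicolsonStep, toLpLin_toLp, toLin'_apply, toLp_sub, toLp_add, toLp_smul]

end EuclideanSpace

/-- Second-order convergence of the Crank–Nicolson scheme.
Let A, B be real N×N matrices with μ₂[A+B] ≤ Chat, T > 0, Δt = T/N_t with ChatΔt ≤ 1.
Let g be continuous on [0,T], let v be three times continuously differentiable
with ‖v'''(t)‖₂ ≤ M₃ on [0,T] and spatial truncation error
δ(t) = v'(t) − (A+B)v(t) − g(t) satisfying ‖δ(t)‖₂ ≤ η on [0,T].  If V⁰ = v(0)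
and (I − (Δt/2)(A+B))V^{n+1} = (I + (Δt/2)(A+B))Vⁿ + (Δt/2)(g(t_n) + g(t_{n+1})),
then ‖v(t_n) − Vⁿ‖₂ ≤ 2T·e^{2T·Chat⁺}·(η + (Δt²/12)M₃) whenever nΔt ≤ T.  In
particular, if η ≤ C₂(Δx² + Δy²), the global error is bounded by a constant
times Δt² + Δx² + Δy². -/
theorem crank_nicolson_global_convergence
    (N : ℕ) (A B : Matrix (Fin N) (Fin N) ℝ) (Chat : ℝ)
    (hμ : ∀ v : Fin N → ℝ, ((A + B).mulVec v) ⬝ᵥ v ≤ Chat * (v ⬝ᵥ v))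
    (T : ℝ) (hT : 0 < T) (Nt : ℕ) (hNt : 1 ≤ Nt)
    (Δt : ℝ) (hΔt : Δt = T / Nt) (hCΔt : Chat * Δt ≤ 1)
    (g : ℝ → Fin N → ℝ) (hg : ContinuousOn g (Set.Icc 0 T))
    (v : ℝ → Fin N → ℝ) (hv : ContDiff ℝ 3 v)
    (M₃ : ℝ) (hM₃ : ∀ t ∈ Set.Icc (0 : ℝ) T, l2norm (iteratedDeriv 3 v t) ≤ M₃)
    (η : ℝ)
    (hδ : ∀ t ∈ Set.Icc (0 : ℝ) T,
      l2norm (deriv v t - (A + B).mulVec (v t) - g t) ≤ η)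
    (V : ℕ → Fin N → ℝ) (hV0 : V 0 = v 0)
    (hstep : ∀ n : ℕ,
      (1 - (Δt/2) • (A + B)).mulVec (V (n+1))
        = (1 + (Δt/2) • (A + B)).mulVec (V n)
          + (Δt/2) • (g ((n : ℝ) * Δt) + g (((n : ℝ) + 1) * Δt))) :
    (∀ n : ℕ, (n : ℝ) * Δt ≤ T →
      l2norm (v ((n : ℝ) * Δt) - V n)
        ≤ 2 * T * Real.exp (2 * T * (max Chat 0)) * (η + (Δt^2/12) * M₃)) ∧
    (∀ C₂ Δx Δy : ℝ, η ≤ C₂ * (Δx^2 + Δy^2) →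
      ∃ C : ℝ, ∀ n : ℕ, (n : ℝ) * Δt ≤ T →
        l2norm (v ((n : ℝ) * Δt) - V n) ≤ C * (Δt^2 + Δx^2 + Δy^2)) := by
  have hderiv (k : ℕ) (hk : (k : WithTop ℕ∞) < 3) (t : ℝ) (_ : t ∈ Set.Icc 0 T) :=
    (hasDerivAt_toLp_iteratedDeriv hv hk t).hasDerivWithinAt (s := Set.Icc 0 T)
  simp only [l2norm_eq_norm_toLp, WithLp.toLp_sub] at *
  exact crank_nicolson_global_convergence_general (toEuclideanLin (A + B)) Chat
    (inner_toEuclideanLin_self_le hμ) T Δt (hΔt ▸ by positivity) hCΔt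
    (fun t ↦ WithLp.toLp 2 (g t)) _ _ _ _
    (hderiv 0 (by norm_num)) (hderiv 1 (by norm_num)) (hderiv 2 (by norm_num)) M₃ hM₃ η
    (by simpa [add_mulVec] using hδ) (fun n ↦ WithLp.toLp 2 (V n)) (by simp [hV0])
    (fun n _ ↦ isCrankNicolsonStep_toLp_iff.2 (hstep n))
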